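/- Every automorphism φ of F₂ can be written as φ = β∘δ∘φ', where β is a Whitehead automorphism of type (W1), δ is a (possibly empty) composition of automorphisms from {δ₁, δ₂, δ₃, δ₄}, and φ' is a chain of type (C1) or of type (C2). -/

import Mathlib

noncomputable section

/-- The free group of rank two. -/
abbrev F : Type := FreeGroup (Fin 2)

/-- The generator `a`. -/
def ga : F := FreeGroup.of 0

/-- The generator `b`. -/
def gb : F := FreeGroup.of 1

/-- Build an automorphism of `F` from images of the generators together with
an explicit inverse. -/
def mkAut (x y xi yi : F)
    (h1 : FreeGroup.lift ![xi, yi] x = ga)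
    (h2 : FreeGroup.lift ![xi, yi] y = gb)
    (h3 : FreeGroup.lift ![x, y] xi = ga)
    (h4 : FreeGroup.lift ![x, y] yi = gb) : MulAut F :=
  MonoidHom.toMulEquiv (FreeGroup.lift ![x, y]) (FreeGroup.lift ![xi, yi])
    (by
      ext i
      fin_cases i
      · simpa [ga] using h1
      · simpa [gb] using h2)
    (by
      ext i
      fin_cases i
      · simpa [ga] using h3
      · simpa [gb] using h4)

/-- `σ : a ↦ ab, b ↦ b`. -/
def σ : MulAut F :=
  mkAut (ga * gb) gb (ga * gb⁻¹) gb
    (by simp [ga, gb]) (by simp [ga, gb]) (by simp [ga, gb]) (by simp [ga, gb])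

/-- `τ : a ↦ a, b ↦ ba`. -/
def τ : MulAut F :=
  mkAut ga (gb * ga) ga (gb * ga⁻¹)
    (by simp [ga, gb]) (by simp [ga, gb]) (by simp [ga, gb]) (by simp [ga, gb])

/-- `δ₁ : a ↦ b⁻¹ab, b ↦ b`. -/
def δ₁ : MulAut F :=
  mkAut (gb⁻¹ * ga * gb) gb (gb * ga * gb⁻¹) gb
    (by simp [ga, gb, mul_assoc]) (by simp [ga, gb]) (by simp [ga, gb, mul_assoc]) (by simp [ga, gb])

/-- `δ₂ : a ↦ bab⁻¹, b ↦ b`. -/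
def δ₂ : MulAut F :=
  mkAut (gb * ga * gb⁻¹) gb (gb⁻¹ * ga * gb) gb
    (by simp [ga, gb, mul_assoc]) (by simp [ga, gb]) (by simp [ga, gb, mul_assoc]) (by simp [ga, gb])

/-- `δ₃ : a ↦ a, b ↦ a⁻¹ba`. -/
def δ₃ : MulAut F :=
  mkAut ga (ga⁻¹ * gb * ga) ga (ga * gb * ga⁻¹)
    (by simp [ga, gb]) (by simp [ga, gb, mul_assoc]) (by simp [ga, gb]) (by simp [ga, gb, mul_assoc])

/-- `δ₄ : a ↦ a, b ↦ aba⁻¹`. -/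
def δ₄ : MulAut F :=
  mkAut ga (ga * gb * ga⁻¹) ga (ga⁻¹ * gb * ga)
    (by simp [ga, gb]) (by simp [ga, gb, mul_assoc]) (by simp [ga, gb]) (by simp [ga, gb, mul_assoc])

/-- `π : a ↦ b, b ↦ a⁻¹`. -/
def pi' : MulAut F :=
  mkAut gb ga⁻¹ gb⁻¹ ga
    (by simp [ga, gb]) (by simp [ga, gb]) (by simp [ga, gb]) (by simp [ga, gb])

/-- Word length of (the reduced word representing) an element of `F`. -/
def len (w : F) : ℕ := w.toWord.length

/-- Cyclic length: minimal word length among all conjugates. -/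
def cyclen (w : F) : ℕ := sInf {n | ∃ g : F, len (g * w * g⁻¹) = n}

/-- The chain `τ^{m_k}σ^{l_k}⋯τ^{m_1}σ^{l_1}` of type (C1) determined by the list
`[(l_k, m_k), …, (l_1, m_1)]` of pairs of exponents. -/
def chainC1 (c : List (ℕ × ℕ)) : MulAut F :=
  (c.map fun p => τ ^ p.2 * σ ^ p.1).prod

/-- The chain `τ^{-m_k}σ^{-l_k}⋯τ^{-m_1}σ^{-l_1}` of type (C2) determined by the list
`[(l_k, m_k), …, (l_1, m_1)]` of pairs of exponents. -/
def chainC2 (c : List (ℕ × ℕ)) : MulAut F :=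
  (c.map fun p => (τ ^ p.2)⁻¹ * (σ ^ p.1)⁻¹).prod

/-- Number of factors of `σ` in a chain. -/
def sigmaCount (c : List (ℕ × ℕ)) : ℕ := (c.map Prod.fst).sum

/-- Number of factors of `τ` in a chain. -/
def tauCount (c : List (ℕ × ℕ)) : ℕ := (c.map Prod.snd).sum

/-- The length `Σ (l_i + m_i)` of a chain. -/
def chainLen (c : List (ℕ × ℕ)) : ℕ := sigmaCount c + tauCount c

/-- A Whitehead automorphism of type (W1): it permutes `{a, a⁻¹, b, b⁻¹}`. -/
def IsW1 (β : MulAut F) : Prop :=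
  β ga ∈ ({ga, ga⁻¹, gb, gb⁻¹} : Set F) ∧ β gb ∈ ({ga, ga⁻¹, gb, gb⁻¹} : Set F)

/-- A chain of type (C1). -/
def IsC1 (φ : MulAut F) : Prop := ∃ c : List (ℕ × ℕ), c ≠ [] ∧ φ = chainC1 c

/-- A chain of type (C2). -/
def IsC2 (φ : MulAut F) : Prop := ∃ c : List (ℕ × ℕ), c ≠ [] ∧ φ = chainC2 c

/-- A positive element: a product of the generators `a` and `b`. -/
def IsPositive (w : F) : Prop := w ∈ Submonoid.closure ({ga, gb} : Set F)

/-- The four automorphisms `δ₁, δ₂, δ₃, δ₄`. -/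
def δIdx : Fin 4 → MulAut F := ![δ₁, δ₂, δ₃, δ₄]


/-! ### Common prefixes of words and the Lyndon length function -/

/-- Length of the longest common prefix of two words. -/
def lcp : List (Fin 2 × Bool) → List (Fin 2 × Bool) → ℕ
  | x :: xs, y :: ys => if x = y then lcp xs ys + 1 else 0
  | _, _ => 0

theorem le_lcp_iff (k : ℕ) (L M : List (Fin 2 × Bool)) :
    k ≤ lcp L M ↔ k ≤ L.length ∧ k ≤ M.length ∧ L.take k = M.take k := by
  induction L generalizing M k with
  | nil =>
    simp only [lcp, List.length_nil]
    constructor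
    · intro h
      obtain rfl : k = 0 := by omega
      simp
    · rintro ⟨h, -⟩; exact h
  | cons x xs ih =>
    cases M with
    | nil =>
      simp only [lcp, List.length_nil]
      constructor
      · intro h
        obtain rfl : k = 0 := by omega
        simp
      · rintro ⟨-, h, -⟩; exact h
    | cons y ys =>
      cases k with
      | zero => simp
      | succ k =>
        by_cases hxy : x = y
        · simp [lcp, hxy, ih]
        · simp [lcp, hxy]

theorem isReduced_invRev {L : List (Fin 2 × Bool)} (h : FreeGroup.IsReduced L) :
    FreeGroup.IsReduced (FreeGroup.invRev L) := by
  rw [FreeGroup.isReduced_iff_reduce_eq] at h ⊢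
  rw [FreeGroup.reduce_invRev, h]

theorem norm_mk_reduced {L : List (Fin 2 × Bool)} (h : FreeGroup.IsReduced L) :
    len (FreeGroup.mk L) = L.length := by
  simp [len, FreeGroup.toWord_mk, h.reduce_eq]

theorem norm_lcp (L M : List (Fin 2 × Bool)) (hL : FreeGroup.IsReduced L)
    (hM : FreeGroup.IsReduced M) :
    len ((FreeGroup.mk L)⁻¹ * FreeGroup.mk M) + 2 * lcp L M = L.length + M.length := by
  induction L generalizing M with
  | nil =>
    have : (FreeGroup.mk ([] : List (Fin 2 × Bool)))⁻¹ = 1 := by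
      rw [FreeGroup.inv_mk, FreeGroup.invRev_empty]; rfl
    rw [this, one_mul, norm_mk_reduced hM]; simp [lcp]
  | cons x xs ih =>
    cases M with
    | nil =>
      have : (FreeGroup.mk ([] : List (Fin 2 × Bool))) = 1 := rfl
      rw [this, mul_one, FreeGroup.inv_mk, norm_mk_reduced (isReduced_invRev hL)]
      simp [lcp]
    | cons y ys =>
      by_cases hxy : x = y
      · subst hxy
        have e : (FreeGroup.mk (x :: xs))⁻¹ * FreeGroup.mk (x :: ys)
            = (FreeGroup.mk xs)⁻¹ * FreeGroup.mk ys := by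
          have h1 : ∀ zs, FreeGroup.mk (x :: zs) = FreeGroup.mk [x] * FreeGroup.mk zs := by
            intro zs; simp
          rw [h1, h1 ys]; group
        have := ih ys (hL.infix (List.suffix_cons x xs).isInfix)
          (hM.infix (List.suffix_cons x ys).isInfix)
        rw [e]
        simp only [lcp, if_true, List.length_cons]
        omega
      · have hr : FreeGroup.IsReduced (FreeGroup.invRev (x :: xs) ++ (y :: ys)) := by
          have h1 := isReduced_invRev hL
          rw [FreeGroup.invRev_cons] at h1 ⊢
          refine FreeGroup.IsReduced.append_overlap h1 ?_ (by simp [FreeGroup.invRev])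
          simp only [FreeGroup.invRev, List.map_cons, List.map_nil, List.reverse_cons,
            List.reverse_nil, List.nil_append, List.cons_append]
          rw [FreeGroup.isReduced_cons_cons]
          refine ⟨?_, hM⟩
          rcases x with ⟨x1, x2⟩
          rcases y with ⟨y1, y2⟩
          simp only
          rintro rfl
          cases x2 <;> cases y2 <;> simp_all
        rw [FreeGroup.inv_mk, FreeGroup.mul_mk, norm_mk_reduced hr]
        simp [lcp, hxy]

/-- Length of the common prefix of two elements (the Gromov product). -/
def cp (x y : F) : ℕ := lcp x.toWord y.toWord

theorem cp_eq (x y : F) : len (x⁻¹ * y) + 2 * cp x y = len x + len y := by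
  have := norm_lcp x.toWord y.toWord FreeGroup.isReduced_toWord FreeGroup.isReduced_toWord
  rw [FreeGroup.mk_toWord, FreeGroup.mk_toWord] at this
  exact this

theorem le_cp_iff (k : ℕ) (x y : F) :
    k ≤ cp x y ↔ k ≤ len x ∧ k ≤ len y ∧ x.toWord.take k = y.toWord.take k :=
  le_lcp_iff _ _ _

theorem len_inv (x : F) : len x⁻¹ = len x := FreeGroup.norm_inv_eq

theorem len_mk_le (L : List (Fin 2 × Bool)) : len (FreeGroup.mk L) ≤ L.length :=
  FreeGroup.norm_mk_le

theorem len_mul_le (x y : F) : len (x * y) ≤ len x + len y := FreeGroup.norm_mul_le x y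

theorem len_pos {x : F} (h : x ≠ 1) : 0 < len x := by
  rcases Nat.eq_zero_or_pos (len x) with h0 | h0
  · exact absurd (FreeGroup.norm_eq_zero.1 h0) h
  · exact h0

theorem cp_ultra (x y z : F) (k : ℕ) (h1 : k ≤ cp x y) (h2 : k ≤ cp y z) : k ≤ cp x z := by
  rw [le_cp_iff] at *
  exact ⟨h1.1, h2.2.1, h1.2.2.trans h2.2.2⟩

theorem cp_comm (x y : F) : cp x y = cp y x := by
  apply le_antisymm
  · have := (le_cp_iff _ x y).1 le_rfl
    exact (le_cp_iff _ _ _).2 ⟨this.2.1, this.1, this.2.2.symm⟩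
  · have := (le_cp_iff _ y x).1 le_rfl
    exact (le_cp_iff _ _ _).2 ⟨this.2.1, this.1, this.2.2.symm⟩

theorem cp_inv_self {x : F} (h : x ≠ 1) : 2 * cp x⁻¹ x < len x := by
  by_contra hc
  have hc : len x ≤ 2 * cp x⁻¹ x := not_lt.1 hc
  have hn := len_pos h
  obtain ⟨-, hk, he⟩ := (le_cp_iff _ x⁻¹ x).1 le_rfl
  generalize cp x⁻¹ x = k at *
  have hred := FreeGroup.isReduced_toWord (x := x)
  rw [FreeGroup.toWord_inv] at he
  unfold len at *
  generalize x.toWord = w at *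
  have key : ∀ i (hi : i < k), w[i]'(by omega) =
      ((w[w.length - 1 - i]'(by omega)).1, !(w[w.length - 1 - i]'(by omega)).2) := by
    intro i hi
    have h1 : ((FreeGroup.invRev w).take k)[i]? = (w.take k)[i]? := by rw [he]
    rw [List.getElem?_take_of_lt hi, List.getElem?_take_of_lt hi,
      List.getElem?_eq_getElem (by simp; omega), List.getElem?_eq_getElem (by omega)] at h1
    have h2 := (Option.some.inj h1).symm
    rw [h2]
    simp [FreeGroup.invRev]
  rcases Nat.even_or_odd' w.length with ⟨m, hm | hm⟩
  · have h1 := key (m - 1) (by omega)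
    have h2 := List.isChain_iff_getElem.1 hred (m - 1) (by omega)
    have e : w.length - 1 - (m - 1) = m - 1 + 1 := by omega
    simp only [e] at h1
    rw [h1] at h2
    simp at h2
  · have h1 := key m (by omega)
    have e : w.length - 1 - m = m := by omega
    simp only [e] at h1
    have := congrArg Prod.snd h1
    simp at this

theorem drop_eq_invRev (w : List (Fin 2 × Bool)) (m : ℕ) :
    w.drop (w.length - m) = FreeGroup.invRev ((FreeGroup.invRev w).take m) := by
  unfold FreeGroup.invRev
  rw [List.take_reverse, List.map_reverse, List.reverse_reverse, List.length_map,
    ← List.map_drop]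
  simp [Function.comp_def]

theorem shorten {u v : F} {m : ℕ} (hm : 0 < m) (hu : len u = 2 * m) (hv : 2 * m ≤ len v)
    (h1 : m ≤ cp v⁻¹ u) (h2 : m ≤ cp u⁻¹ v) :
    ∃ q : F, len (q⁻¹ * u * q) ≤ len u ∧ len (q⁻¹ * (v * u) * q) < len v := by
  obtain ⟨-, -, h1⟩ := (le_cp_iff _ _ _).1 h1
  obtain ⟨-, -, h2⟩ := (le_cp_iff _ _ _).1 h2
  have du := drop_eq_invRev u.toWord m
  have dv := drop_eq_invRev v.toWord m
  rw [← FreeGroup.toWord_inv] at du dv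
  have hu' : u.toWord.length = 2 * m := hu
  have hv' : 2 * m ≤ v.toWord.length := hv
  set P := u.toWord.take m with hP
  set Q := u⁻¹.toWord.take m with hQ
  have eu : u = FreeGroup.mk P * (FreeGroup.mk Q)⁻¹ := by
    rw [FreeGroup.inv_mk, ← du, FreeGroup.mul_mk, hP, show u.toWord.length - m = m by omega,
      List.take_append_drop, FreeGroup.mk_toWord]
  set S := (v.toWord.take (v.toWord.length - m)).drop m with hS
  have ev : v = FreeGroup.mk Q * FreeGroup.mk S * (FreeGroup.mk P)⁻¹ := by
    rw [FreeGroup.inv_mk, ← h1, ← dv, FreeGroup.mul_mk, FreeGroup.mul_mk, h2, hS]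
    have : v.toWord.take m = (v.toWord.take (v.toWord.length - m)).take m := by
      rw [List.take_take, min_eq_left (by omega)]
    rw [this, List.take_append_drop, List.take_append_drop, FreeGroup.mk_toWord]
  have lS : S.length = v.toWord.length - m - m := by simp [hS]
  have lP : P.length ≤ m := by simp [hP]
  have lQ : Q.length ≤ m := by simp [hQ]
  have e1 : (FreeGroup.mk Q)⁻¹ * u * FreeGroup.mk Q = (FreeGroup.mk Q)⁻¹ * FreeGroup.mk P := by
    conv_lhs => rw [eu]
    group
  have e2 : (FreeGroup.mk Q)⁻¹ * (v * u) * FreeGroup.mk Q = FreeGroup.mk S := by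
    conv_lhs => rw [eu, ev]
    group
  refine ⟨FreeGroup.mk Q, ?_, ?_⟩
  · rw [e1]
    have a1 := len_mul_le (FreeGroup.mk Q)⁻¹ (FreeGroup.mk P)
    have a2 := len_mk_le P
    have a3 := len_mk_le Q
    rw [len_inv] at a1
    omega
  · rw [e2]
    have a2 := len_mk_le S
    have : len v = v.toWord.length := rfl
    omega

/-! ### Explicit automorphisms -/

theorem aut_ext {φ ψ : MulAut F} (h1 : φ ga = ψ ga) (h2 : φ gb = ψ gb) : φ = ψ := by
  apply MulEquiv.toMonoidHom_injective
  apply FreeGroup.ext_hom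
  intro i
  fin_cases i
  · exact h1
  · exact h2

/-- The swap of the generators. -/
def sw : MulAut F :=
  mkAut gb ga gb ga
    (by simp [ga, gb]) (by simp [ga, gb]) (by simp [ga, gb]) (by simp [ga, gb])

/-- The inversion of the first generator. -/
def fl : MulAut F :=
  mkAut ga⁻¹ gb ga⁻¹ gb
    (by simp [ga, gb]) (by simp [ga, gb]) (by simp [ga, gb]) (by simp [ga, gb])

section mk
variable (x y xi yi : F)
    (h1 : FreeGroup.lift ![xi, yi] x = ga)
    (h2 : FreeGroup.lift ![xi, yi] y = gb)
    (h3 : FreeGroup.lift ![x, y] xi = ga)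
    (h4 : FreeGroup.lift ![x, y] yi = gb)

theorem mkAut_ga : mkAut x y xi yi h1 h2 h3 h4 ga = x := by
  change FreeGroup.lift ![x, y] ga = x
  simp [ga]

theorem mkAut_gb : mkAut x y xi yi h1 h2 h3 h4 gb = y := by
  change FreeGroup.lift ![x, y] gb = y
  simp [gb]

theorem mkAut_inv_ga : (mkAut x y xi yi h1 h2 h3 h4)⁻¹ ga = xi := by
  change FreeGroup.lift ![xi, yi] ga = xi
  simp [ga]

theorem mkAut_inv_gb : (mkAut x y xi yi h1 h2 h3 h4)⁻¹ gb = yi := by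
  change FreeGroup.lift ![xi, yi] gb = yi
  simp [gb]
end mk

@[simp] theorem σ_ga : σ ga = ga * gb := mkAut_ga ..
@[simp] theorem σ_gb : σ gb = gb := mkAut_gb ..
@[simp] theorem σi_ga : MulEquiv.symm σ ga = ga * gb⁻¹ := mkAut_inv_ga ..
@[simp] theorem σi_gb : MulEquiv.symm σ gb = gb := mkAut_inv_gb ..
@[simp] theorem τ_ga : τ ga = ga := mkAut_ga ..
@[simp] theorem τ_gb : τ gb = gb * ga := mkAut_gb ..
@[simp] theorem τi_ga : MulEquiv.symm τ ga = ga := mkAut_inv_ga ..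
@[simp] theorem τi_gb : MulEquiv.symm τ gb = gb * ga⁻¹ := mkAut_inv_gb ..
@[simp] theorem sw_ga : sw ga = gb := mkAut_ga ..
@[simp] theorem sw_gb : sw gb = ga := mkAut_gb ..
@[simp] theorem fl_ga : fl ga = ga⁻¹ := mkAut_ga ..
@[simp] theorem fl_gb : fl gb = gb := mkAut_gb ..

/-- The monoid of signed permutations. -/
def W : Submonoid (MulAut F) := Submonoid.closure {sw, fl}

theorem sw_mem : sw ∈ W := Submonoid.subset_closure (by simp)
theorem fl_mem : fl ∈ W := Submonoid.subset_closure (by simp)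

theorem W_isW1 {β : MulAut F} (h : β ∈ W) : IsW1 β := by
  induction h using Submonoid.closure_induction_left with
  | one => simp [IsW1]
  | mul_left x hx y hy ih =>
    obtain ⟨h1, h2⟩ := ih
    simp only [Set.mem_insert_iff, Set.mem_singleton_iff] at h1 h2 hx
    rcases hx with rfl | rfl <;> constructor
    · rcases h1 with h | h | h | h <;> simp [h]
    · rcases h2 with h | h | h | h <;> simp [h]
    · rcases h1 with h | h | h | h <;> simp [h]
    · rcases h2 with h | h | h | h <;> simp [h]

theorem isW1_W {β : MulAut F} (h : IsW1 β) : β ∈ W := by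
  have hs := sw_mem
  have hf := fl_mem
  have hgf : sw * fl * sw ∈ W := mul_mem (mul_mem hs hf) hs
  have inj : ∀ {x y : F}, β x = β y → x = y := fun h => β.injective h
  have n1 : ga ≠ gb := by
    intro h; exact absurd (FreeGroup.of_injective h) (by decide)
  have n2 : ga ≠ gb⁻¹ := by
    intro h
    have := congrArg FreeGroup.toWord h
    simp [ga, gb, FreeGroup.toWord_inv, FreeGroup.invRev] at this
  have m1 : β ga ≠ β gb := fun h => n1 (inj h)
  have m2 : β ga ≠ (β gb)⁻¹ := fun h => n2 (inj (by simpa using h))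
  obtain ⟨h1, h2⟩ := h
  simp only [Set.mem_insert_iff, Set.mem_singleton_iff] at h1 h2
  rcases h1 with h1 | h1 | h1 | h1 <;> rcases h2 with h2 | h2 | h2 | h2
  case inl.inl => exact absurd (by simp [h1, h2]) m1
  case inl.inr.inl => exact absurd (by simp [h1, h2]) m2
  case inr.inl.inl => exact absurd (by simp [h1, h2]) m2
  case inr.inl.inr.inl => exact absurd (by simp [h1, h2]) m1
  case inr.inr.inl.inr.inr.inl => exact absurd (by simp [h1, h2]) m1
  case inr.inr.inl.inr.inr.inr => exact absurd (by simp [h1, h2]) m2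
  case inr.inr.inr.inr.inr.inl => exact absurd (by simp [h1, h2]) m2
  case inr.inr.inr.inr.inr.inr => exact absurd (by simp [h1, h2]) m1
  case inl.inr.inr.inl =>
    rw [show β = 1 from aut_ext (by simp [h1]) (by simp [h2])]; exact one_mem _
  case inl.inr.inr.inr =>
    rw [show β = sw * fl * sw from aut_ext (by simp [h1]) (by simp [h2])]; exact hgf
  case inr.inl.inr.inr.inl =>
    rw [show β = fl from aut_ext (by simp [h1]) (by simp [h2])]; exact hf
  case inr.inl.inr.inr.inr =>
    rw [show β = fl * (sw * fl * sw) from aut_ext (by simp [h1]) (by simp [h2])]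
    exact mul_mem hf hgf
  case inr.inr.inl.inl =>
    rw [show β = sw from aut_ext (by simp [h1]) (by simp [h2])]; exact hs
  case inr.inr.inl.inr.inl =>
    rw [show β = fl * sw from aut_ext (by simp [h1]) (by simp [h2])]; exact mul_mem hf hs
  case inr.inr.inr.inl =>
    rw [show β = sw * fl from aut_ext (by simp [h1]) (by simp [h2])]; exact mul_mem hs hf
  case inr.inr.inr.inr.inl =>
    rw [show β = fl * (sw * fl) from aut_ext (by simp [h1]) (by simp [h2])]
    exact mul_mem hf (mul_mem hs hf)

/-! ### The set of automorphisms of the required form is everything generated -/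

/-- The four transvections. -/
def T : Set (MulAut F) := {σ, σ⁻¹, τ, τ⁻¹}

/-- Positive chains. -/
def PosC : Submonoid (MulAut F) := Submonoid.closure {σ, τ}

/-- Negative chains. -/
def NegC : Submonoid (MulAut F) := Submonoid.closure {σ⁻¹, τ⁻¹}

theorem mul_conj (ψ : MulAut F) (g : F) :
    ψ * MulAut.conj g = MulAut.conj (ψ g) * ψ := by
  ext x; simp

theorem conj_mul' (ψ : MulAut F) (g : F) :
    MulAut.conj g * ψ = ψ * MulAut.conj (ψ⁻¹ g) := by
  rw [mul_conj]; simp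

theorem T_W {β : MulAut F} (h : β ∈ W) :
    ∀ t ∈ T, ∃ g, ∃ t' ∈ T, t * β = β * (MulAut.conj g * t') := by
  induction h using Submonoid.closure_induction_left with
  | one => intro t ht; exact ⟨1, t, ht, by simp⟩
  | mul_left x hx y hy ih =>
    have key : ∀ t ∈ T, ∃ g, ∃ t' ∈ T, t * x = x * (MulAut.conj g * t') := by
      intro t ht
      simp only [T, Set.mem_insert_iff, Set.mem_singleton_iff] at ht hx
      rcases hx with rfl | rfl
      · rcases ht with rfl | rfl | rfl | rfl
        · exact ⟨1, τ, by simp [T], aut_ext (by simp) (by simp)⟩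
        · exact ⟨1, τ⁻¹, by simp [T], aut_ext (by simp) (by simp)⟩
        · exact ⟨1, σ, by simp [T], aut_ext (by simp) (by simp)⟩
        · exact ⟨1, σ⁻¹, by simp [T], aut_ext (by simp) (by simp)⟩
      · rcases ht with rfl | rfl | rfl | rfl
        · exact ⟨gb⁻¹, σ⁻¹, by simp [T], aut_ext (by simp [mul_assoc]) (by simp)⟩
        · exact ⟨gb, σ, by simp [T], aut_ext (by simp [mul_assoc]) (by simp)⟩
        · exact ⟨1, τ⁻¹, by simp [T], aut_ext (by simp) (by simp)⟩
        · exact ⟨1, τ, by simp [T], aut_ext (by simp) (by simp)⟩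
    intro t ht
    obtain ⟨g, t', ht', e⟩ := key t ht
    obtain ⟨g', t'', ht'', e'⟩ := ih t' ht'
    refine ⟨y⁻¹ g * g', t'', ht'', ?_⟩
    calc t * (x * y) = x * (MulAut.conj g * (t' * y)) := by
          rw [← mul_assoc, e]; simp only [mul_assoc]
      _ = x * ((MulAut.conj g * y) * (MulAut.conj g' * t'')) := by
          rw [e']; simp only [mul_assoc]
      _ = _ := by rw [conj_mul', map_mul]; simp only [mul_assoc]

/-- The automorphisms of the required form, up to the shape of the inner part. -/
def Good (φ : MulAut F) : Prop :=
  ∃ β ∈ W, ∃ g : F, ∃ p : MulAut F, (p ∈ PosC ∨ p ∈ NegC) ∧ φ = β * (MulAut.conj g * p)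

theorem Good.w {φ β : MulAut F} (h : Good φ) (hb : β ∈ W) : Good (β * φ) := by
  obtain ⟨β', hb', g, p, hp, rfl⟩ := h
  exact ⟨β * β', mul_mem hb hb', g, p, hp, by simp only [mul_assoc]⟩

theorem Good.conj {φ : MulAut F} (h : Good φ) (g : F) : Good (MulAut.conj g * φ) := by
  obtain ⟨β', hb', g', p, hp, rfl⟩ := h
  refine ⟨β', hb', β'⁻¹ g * g', p, hp, ?_⟩
  rw [← mul_assoc, conj_mul', map_mul]; simp only [mul_assoc]

theorem good_of {p : MulAut F} (hp : p ∈ PosC ∨ p ∈ NegC) : Good p :=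
  ⟨1, one_mem _, 1, p, hp, by simp⟩

theorem PosC.cases {p : MulAut F} (h : p ∈ PosC) :
    p = 1 ∨ (∃ q ∈ PosC, p = σ * q) ∨ (∃ q ∈ PosC, p = τ * q) := by
  induction h using Submonoid.closure_induction_left with
  | one => exact Or.inl rfl
  | mul_left x hx y hy ih =>
    simp only [Set.mem_insert_iff, Set.mem_singleton_iff] at hx
    rcases hx with rfl | rfl
    · exact Or.inr (Or.inl ⟨y, hy, rfl⟩)
    · exact Or.inr (Or.inr ⟨y, hy, rfl⟩)

theorem NegC.cases {p : MulAut F} (h : p ∈ NegC) :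
    p = 1 ∨ (∃ q ∈ NegC, p = σ⁻¹ * q) ∨ (∃ q ∈ NegC, p = τ⁻¹ * q) := by
  induction h using Submonoid.closure_induction_left with
  | one => exact Or.inl rfl
  | mul_left x hx y hy ih =>
    simp only [Set.mem_insert_iff, Set.mem_singleton_iff] at hx
    rcases hx with rfl | rfl
    · exact Or.inr (Or.inl ⟨y, hy, rfl⟩)
    · exact Or.inr (Or.inr ⟨y, hy, rfl⟩)

theorem rel1 : σ * τ⁻¹ = MulAut.conj ga * (fl * sw * σ⁻¹) :=
  aut_ext (by simp [mul_assoc]) (by simp [mul_assoc])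
theorem rel2 : σ⁻¹ * τ = MulAut.conj gb * (sw * fl * σ) :=
  aut_ext (by simp [mul_assoc]) (by simp [mul_assoc])
theorem rel3 : τ * σ⁻¹ = MulAut.conj gb * (sw * fl * τ⁻¹) :=
  aut_ext (by simp [mul_assoc]) (by simp [mul_assoc])
theorem rel4 : τ⁻¹ * σ = MulAut.conj ga * (fl * sw * τ) :=
  aut_ext (by simp [mul_assoc]) (by simp [mul_assoc])

theorem σ_pos : σ ∈ PosC := Submonoid.subset_closure (by simp)
theorem τ_pos : τ ∈ PosC := Submonoid.subset_closure (by simp)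
theorem σ_neg : σ⁻¹ ∈ NegC := Submonoid.subset_closure (by simp)
theorem τ_neg : τ⁻¹ ∈ NegC := Submonoid.subset_closure (by simp)

theorem good_chain {t p : MulAut F} (ht : t ∈ T) (hp : p ∈ PosC ∨ p ∈ NegC) : Good (t * p) := by
  simp only [T, Set.mem_insert_iff, Set.mem_singleton_iff] at ht
  have hs := sw_mem
  have hf := fl_mem
  have go : ∀ {q r s t : MulAut F} {g : F} {w : MulAut F}, s * r = MulAut.conj g * (w * t) →
      w ∈ W → Good (t * q) → Good (s * (r * q)) := by
    intro q r s t g w e hw hg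
    rw [← mul_assoc, e, mul_assoc, mul_assoc]
    exact (hg.w hw).conj g
  rcases ht with rfl | rfl | rfl | rfl
  · rcases hp with hp | hp
    · exact good_of (Or.inl (mul_mem σ_pos hp))
    · rcases NegC.cases hp with rfl | ⟨q, hq, rfl⟩ | ⟨q, hq, rfl⟩
      · rw [mul_one]; exact good_of (Or.inl σ_pos)
      · rw [mul_inv_cancel_left]; exact good_of (Or.inr hq)
      · exact go rel1 (mul_mem hf hs) (good_of (Or.inr (mul_mem σ_neg hq)))
  · rcases hp with hp | hp
    · rcases PosC.cases hp with rfl | ⟨q, hq, rfl⟩ | ⟨q, hq, rfl⟩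
      · rw [mul_one]; exact good_of (Or.inr σ_neg)
      · rw [inv_mul_cancel_left]; exact good_of (Or.inl hq)
      · exact go rel2 (mul_mem hs hf) (good_of (Or.inl (mul_mem σ_pos hq)))
    · exact good_of (Or.inr (mul_mem σ_neg hp))
  · rcases hp with hp | hp
    · exact good_of (Or.inl (mul_mem τ_pos hp))
    · rcases NegC.cases hp with rfl | ⟨q, hq, rfl⟩ | ⟨q, hq, rfl⟩
      · rw [mul_one]; exact good_of (Or.inl τ_pos)
      · exact go rel3 (mul_mem hs hf)
          (good_of (Or.inr (mul_mem τ_neg hq)))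
      · rw [mul_inv_cancel_left]; exact good_of (Or.inr hq)
  · rcases hp with hp | hp
    · rcases PosC.cases hp with rfl | ⟨q, hq, rfl⟩ | ⟨q, hq, rfl⟩
      · rw [mul_one]; exact good_of (Or.inr τ_neg)
      · exact go rel4 (mul_mem hf hs) (good_of (Or.inl (mul_mem τ_pos hq)))
      · rw [inv_mul_cancel_left]; exact good_of (Or.inl hq)
    · exact good_of (Or.inr (mul_mem τ_neg hp))

theorem Good.t {φ t : MulAut F} (h : Good φ) (ht : t ∈ T) : Good (t * φ) := by
  obtain ⟨β, hb, g, p, hp, rfl⟩ := h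
  obtain ⟨g', t', ht', e⟩ := T_W hb t ht
  have : t * (β * (MulAut.conj g * p))
      = β * (MulAut.conj g' * (MulAut.conj (t' g) * (t' * p))) := by
    rw [← mul_assoc, e]
    simp only [mul_assoc]
    rw [← mul_assoc t', mul_conj]
    simp only [mul_assoc]
  rw [this]
  exact ((((good_chain ht' hp).conj _).conj _).w hb)

/-- The subgroup generated by all elementary automorphisms. -/
def H : Subgroup (MulAut F) :=
  Subgroup.closure ({sw, fl, σ} ∪ Set.range (MulAut.conj : F → MulAut F))

theorem sw_inv : sw⁻¹ = sw := by
  rw [inv_eq_iff_mul_eq_one]; exact aut_ext (by simp) (by simp)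
theorem fl_inv : fl⁻¹ = fl := by
  rw [inv_eq_iff_mul_eq_one]; exact aut_ext (by simp) (by simp)

theorem good_of_H {φ : MulAut F} (h : φ ∈ H) : Good φ := by
  induction h using Subgroup.closure_induction_left with
  | one => exact good_of (Or.inl (one_mem _))
  | mul_left x hx y hy ih =>
    rcases hx with (rfl | rfl | rfl) | ⟨g, rfl⟩
    · exact ih.w sw_mem
    · exact ih.w fl_mem
    · exact ih.t (by simp [T])
    · exact ih.conj g
  | inv_mul_cancel x hx y hy ih =>
    rcases hx with (rfl | rfl | rfl) | ⟨g, rfl⟩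
    · rw [sw_inv]; exact ih.w sw_mem
    · rw [fl_inv]; exact ih.w fl_mem
    · exact ih.t (by simp [T])
    · rw [← map_inv]; exact ih.conj _

/-! ### Conversion to the shape of the statement -/

theorem PosC.isC1 {p : MulAut F} (h : p ∈ PosC) : IsC1 p := by
  induction h using Submonoid.closure_induction_left with
  | one => exact ⟨[(0, 0)], by simp, by simp [chainC1]⟩
  | mul_left x hx y hy ih =>
    obtain ⟨c, -, rfl⟩ := ih
    simp only [Set.mem_insert_iff, Set.mem_singleton_iff] at hx
    rcases hx with rfl | rfl
    · exact ⟨(1, 0) :: c, by simp, by simp [chainC1]⟩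
    · exact ⟨(0, 1) :: c, by simp, by simp [chainC1]⟩

theorem NegC.isC2 {p : MulAut F} (h : p ∈ NegC) : IsC2 p := by
  induction h using Submonoid.closure_induction_left with
  | one => exact ⟨[(0, 0)], by simp, by simp [chainC2]⟩
  | mul_left x hx y hy ih =>
    obtain ⟨c, -, rfl⟩ := ih
    simp only [Set.mem_insert_iff, Set.mem_singleton_iff] at hx
    rcases hx with rfl | rfl
    · exact ⟨(1, 0) :: c, by simp, by simp [chainC2]⟩
    · exact ⟨(0, 1) :: c, by simp, by simp [chainC2]⟩

theorem δ₁_eq : δ₁ = MulAut.conj gb⁻¹ :=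
  aut_ext ((mkAut_ga ..).trans (by simp)) ((mkAut_gb ..).trans (by simp))
theorem δ₂_eq : δ₂ = MulAut.conj gb :=
  aut_ext ((mkAut_ga ..).trans (by simp)) ((mkAut_gb ..).trans (by simp))
theorem δ₃_eq : δ₃ = MulAut.conj ga⁻¹ :=
  aut_ext ((mkAut_ga ..).trans (by simp)) ((mkAut_gb ..).trans (by simp))
theorem δ₄_eq : δ₄ = MulAut.conj ga :=
  aut_ext ((mkAut_ga ..).trans (by simp)) ((mkAut_gb ..).trans (by simp))

theorem conj_list (g : F) : ∃ ds : List (Fin 4), MulAut.conj g = (ds.map δIdx).prod := by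
  induction g using FreeGroup.induction_on with
  | C1 => exact ⟨[], by simp⟩
  | of i =>
    fin_cases i
    · exact ⟨[3], by simp [δIdx, δ₄_eq, ga]⟩
    · exact ⟨[1], by simp [δIdx, δ₂_eq, gb]⟩
  | inv_of i h =>
    fin_cases i
    · exact ⟨[2], by simp [δIdx, δ₃_eq, ga]⟩
    · exact ⟨[0], by simp [δIdx, δ₁_eq, gb]⟩
  | mul x y hx hy =>
    obtain ⟨d, hd⟩ := hx
    obtain ⟨e, he⟩ := hy
    exact ⟨d ++ e, by rw [map_mul, hd, he]; simp⟩

theorem good_final {φ : MulAut F} (h : Good φ) :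
    ∃ β : MulAut F, IsW1 β ∧ ∃ ds : List (Fin 4), ∃ φ' : MulAut F,
      (IsC1 φ' ∨ IsC2 φ') ∧ φ = β * (ds.map δIdx).prod * φ' := by
  obtain ⟨β, hb, g, p, hp, rfl⟩ := h
  obtain ⟨ds, hd⟩ := conj_list g
  exact ⟨β, W_isW1 hb, ds, p, hp.imp PosC.isC1 NegC.isC2, by rw [← hd, mul_assoc]⟩

/-! ### Nielsen reduction: `H` is the whole automorphism group -/

theorem sw_H : sw ∈ H := Subgroup.subset_closure (by simp)
theorem fl_H : fl ∈ H := Subgroup.subset_closure (by simp)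
theorem σ_H : σ ∈ H := Subgroup.subset_closure (by simp)
theorem conj_H (g : F) : MulAut.conj g ∈ H := Subgroup.subset_closure (by simp)

theorem W_H {β : MulAut F} (h : β ∈ W) : β ∈ H := by
  have : W ≤ H.toSubmonoid := by
    apply Submonoid.closure_le.2
    rintro x (rfl | rfl)
    · exact sw_H
    · exact fl_H
  exact this h

/-- `u, v` is a basis whose automorphism is not in `H`. -/
def Bad (u v : F) : Prop := ∃ φ : MulAut F, φ ∉ H ∧ φ ga = u ∧ φ gb = v

theorem Bad.swap {u v : F} (h : Bad u v) : Bad v u := by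
  obtain ⟨φ, hφ, rfl, rfl⟩ := h
  exact ⟨φ * sw, fun h => hφ ((H.mul_mem_cancel_right sw_H).1 h), by simp, by simp⟩

theorem Bad.inv {u v : F} (h : Bad u v) : Bad u⁻¹ v := by
  obtain ⟨φ, hφ, rfl, rfl⟩ := h
  exact ⟨φ * fl, fun h => hφ ((H.mul_mem_cancel_right fl_H).1 h), by simp, by simp⟩

theorem Bad.mul {u v : F} (h : Bad u v) : Bad (u * v) v := by
  obtain ⟨φ, hφ, rfl, rfl⟩ := h
  exact ⟨φ * σ, fun h => hφ ((H.mul_mem_cancel_right σ_H).1 h), by simp, by simp⟩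

theorem Bad.conj {u v : F} (h : Bad u v) (g : F) : Bad (g⁻¹ * u * g) (g⁻¹ * v * g) := by
  obtain ⟨φ, hφ, rfl, rfl⟩ := h
  exact ⟨MulAut.conj g⁻¹ * φ, fun h => hφ ((H.mul_mem_cancel_left (conj_H _)).1 h),
    by simp, by simp⟩

theorem Bad.ne_one {u v : F} (h : Bad u v) : u ≠ 1 := by
  obtain ⟨φ, hφ, rfl, rfl⟩ := h
  intro h
  have : ga = 1 := φ.injective (by simpa using h)
  exact FreeGroup.of_ne_one _ this

/-- A bad pair of minimal total length. -/
def MinBad (u v : F) : Prop :=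
  Bad u v ∧ ∀ u' v', Bad u' v' → len u + len v ≤ len u' + len v'

theorem MinBad.swap {u v : F} (h : MinBad u v) : MinBad v u :=
  ⟨h.1.swap, fun u' v' h' => by have := h.2 _ _ h'; omega⟩

theorem MinBad.inv {u v : F} (h : MinBad u v) : MinBad u⁻¹ v :=
  ⟨h.1.inv, fun u' v' h' => by have := h.2 _ _ h'; rw [len_inv]; omega⟩

theorem MinBad.inv' {u v : F} (h : MinBad u v) : MinBad u v⁻¹ := h.swap.inv.swap

theorem MinBad.cp_le {u v : F} (h : MinBad u v) :
    2 * cp u⁻¹ v ≤ len v ∧ 2 * cp u⁻¹ v ≤ len u := by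
  have h1 := h.2 _ _ h.1.mul
  have h2 := h.2 _ _ h.inv.inv'.swap.1.mul
  have h3 := cp_eq u⁻¹ v
  rw [inv_inv, len_inv] at h3
  rw [← mul_inv_rev, len_inv, len_inv] at h2
  omega

theorem MinBad.t3 {y w : F} (h : MinBad y w) : cp w⁻¹ y + cp y⁻¹ w < len y := by
  by_contra hc
  have h1 := h.cp_le
  have h2 := h.swap.cp_le
  have hp := len_pos h.1.ne_one
  obtain ⟨q, hq1, hq2⟩ := shorten (u := y) (v := w) (m := cp w⁻¹ y) (by omega) (by omega)
    (by omega) le_rfl (by omega)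
  have h3 := h.2 _ _ (h.swap.1.mul.swap.conj q)
  omega

theorem MinBad.t4 {y w : F} (h : MinBad y w) : cp w⁻¹ y + cp y⁻¹ w⁻¹ < len y := by
  by_contra hc
  have h1 := h.swap.cp_le
  have h2 := h.inv'.cp_le
  have h3 := cp_inv_self h.1.ne_one
  have h4 := cp_ultra y⁻¹ w⁻¹ y (cp w⁻¹ y) (by omega) le_rfl
  omega

section letters
variable {u v : F}

/-- The image of a letter. -/
def letter (u v : F) (l : Fin 2 × Bool) : F := cond l.2 (![u, v] l.1) (![u, v] l.1)⁻¹

theorem letter_min (h : MinBad u v) {x y : Fin 2 × Bool} (hxy : x.1 ≠ y.1) :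
    MinBad (letter u v x) (letter u v y) := by
  rcases x with ⟨i, b⟩
  rcases y with ⟨j, c⟩
  have h' := h.swap
  fin_cases i <;> fin_cases j <;> cases b <;> cases c <;>
    simp_all [letter, MinBad.inv, MinBad.inv']

theorem letter_ne_one (h : MinBad u v) (x : Fin 2 × Bool) : letter u v x ≠ 1 := by
  have : x.1 ≠ (x.1 + 1, true).1 := by
    rcases x with ⟨i, b⟩
    fin_cases i <;> simp
  exact (letter_min h this).1.ne_one

theorem tri (h : MinBad u v) {x y z : Fin 2 × Bool} (hxy : x.1 = y.1 → x.2 = y.2)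
    (hyz : y.1 = z.1 → y.2 = z.2) :
    cp (letter u v x)⁻¹ (letter u v y) + cp (letter u v y)⁻¹ (letter u v z) < len (letter u v y) := by
  have hy := cp_inv_self (letter_ne_one h y)
  by_cases e1 : x.1 = y.1
  · obtain rfl : x = y := Prod.ext e1 (hxy e1)
    by_cases e2 : x.1 = z.1
    · obtain rfl : x = z := Prod.ext e2 (hyz e2)
      omega
    · have := (letter_min h e2).cp_le
      omega
  · have h1 := (letter_min h e1).cp_le
    by_cases e2 : y.1 = z.1
    · obtain rfl : y = z := Prod.ext e2 (hyz e2)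
      omega
    · have e3 : x.1 = z.1 := by omega
      have h2 := letter_min h (Ne.symm e1)
      by_cases e4 : x.2 = z.2
      · obtain rfl : x = z := Prod.ext e3 e4
        exact h2.t3
      · have : letter u v z = (letter u v x)⁻¹ := by
          rcases x with ⟨i, b⟩
          rcases z with ⟨j, c⟩
          simp only at e3 e4
          subst e3
          cases b <;> cases c <;> simp_all [letter]
        rw [this]
        exact h2.t4

theorem prod_len (h : MinBad u v) (L : List (Fin 2 × Bool)) (x y : Fin 2 × Bool)
    (hr : FreeGroup.IsReduced (x :: y :: L)) :
    cp (letter u v x)⁻¹ ((y :: L).map (letter u v)).prod = cp (letter u v x)⁻¹ (letter u v y) ∧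
    cp (letter u v x)⁻¹ (letter u v y) + 1 + L.length ≤ len ((y :: L).map (letter u v)).prod := by
  induction L generalizing x y with
  | nil =>
    rw [FreeGroup.isReduced_cons_cons] at hr
    have := tri h hr.1 (z := y) (fun _ => rfl)
    simp
    omega
  | cons z L ih =>
    rw [FreeGroup.isReduced_cons_cons] at hr
    obtain ⟨i1, i2⟩ := ih y z hr.2
    have hyz := (FreeGroup.isReduced_cons_cons.1 hr.2).1
    have ht := tri h hr.1 hyz
    rw [List.map_cons, List.prod_cons]
    generalize ((z :: L).map (letter u v)).prod = R at *
    have c1 := cp_eq (letter u v y)⁻¹ R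
    rw [inv_inv, len_inv] at c1
    have c2 := cp_eq (letter u v y) (letter u v y * R)
    rw [inv_mul_cancel_left] at c2
    constructor
    · apply le_antisymm
      · by_contra hc
        have := cp_ultra (letter u v x)⁻¹ (letter u v y * R) (letter u v y)
          (cp (letter u v x)⁻¹ (letter u v y) + 1) (by omega) (by rw [cp_comm (letter u v y * R)]; omega)
        omega
      · exact cp_ultra _ (letter u v y) _ _ le_rfl (by omega)
    · simp only [List.length_cons]
      omega
end letters

theorem aut_eq_prod (φ : MulAut F) (w : F) :
    φ w = (w.toWord.map (letter (φ ga) (φ gb))).prod := by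
  have e : φ.toMonoidHom = FreeGroup.lift ![φ ga, φ gb] := by
    apply FreeGroup.ext_hom
    intro i
    fin_cases i
    · simp [ga]
    · simp [gb]
  have : φ w = FreeGroup.lift ![φ ga, φ gb] (FreeGroup.mk w.toWord) := by
    rw [← e, FreeGroup.mk_toWord]; rfl
  rw [this, FreeGroup.lift_mk]
  rfl

theorem len_ge {φ : MulAut F} (h : MinBad (φ ga) (φ gb)) (w : F) : len w ≤ len (φ w) := by
  rw [aut_eq_prod]
  have hr := FreeGroup.isReduced_toWord (x := w)
  unfold len
  change _ ≤ len _
  cases hw : w.toWord with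
  | nil => simp
  | cons y L =>
    rw [hw] at hr
    have := (prod_len h L y y (FreeGroup.isReduced_cons_cons.2 ⟨fun _ => rfl, hr⟩)).2
    simp only [List.length_cons]
    omega

theorem letter_of_len {w : F} (h : len w ≤ 1) (h1 : w ≠ 1) :
    w ∈ ({ga, ga⁻¹, gb, gb⁻¹} : Set F) := by
  have hp := len_pos h1
  have hl : w.toWord.length = 1 := by unfold len at *; omega
  obtain ⟨⟨i, b⟩, hw⟩ := List.length_eq_one_iff.1 hl
  have e : w = FreeGroup.mk [(i, b)] := by rw [← hw, FreeGroup.mk_toWord]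
  subst e
  fin_cases i <;> cases b
  · right; left; rfl
  · left; rfl
  · right; right; right; rfl
  · right; right; left; rfl

theorem no_minBad {u v : F} (h : MinBad u v) : False := by
  obtain ⟨φ, hφ, rfl, rfl⟩ := h.1
  have hl : ∀ i, len (FreeGroup.of i : F) = 1 := fun i => by simp [len]
  have key : ∀ i : Fin 2, φ⁻¹ (FreeGroup.of i) ∈ ({ga, ga⁻¹, gb, gb⁻¹} : Set F) := by
    intro i
    apply letter_of_len
    · have := len_ge h (φ⁻¹ (FreeGroup.of i))
      rw [MulAut.apply_inv_self, hl] at this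
      exact this
    · intro h0
      have := congrArg φ h0
      rw [MulAut.apply_inv_self, map_one] at this
      exact FreeGroup.of_ne_one _ this
  have : φ⁻¹ ∈ H := W_H (isW1_W ⟨key 0, key 1⟩)
  exact hφ (by simpa using this)

theorem mem_H (φ : MulAut F) : φ ∈ H := by
  by_contra hφ
  let S : Set ℕ := {n | ∃ u v, Bad u v ∧ len u + len v = n}
  have hS : S.Nonempty := ⟨_, φ ga, φ gb, ⟨φ, hφ, rfl, rfl⟩, rfl⟩
  obtain ⟨u, v, hb, he⟩ := Nat.sInf_mem hS
  refine no_minBad (u := u) (v := v) ⟨hb, fun u' v' h' => ?_⟩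
  rw [he]
  exact Nat.sInf_le ⟨u', v', h', rfl⟩

/-- Corollary 5.2: every automorphism of `F₂` factors as `β ∘ δ ∘ φ'` with `β` of type (W1),
`δ` a composition of the `δᵢ` and `φ'` a chain of type (C1) or (C2). -/
theorem stmt18 (φ : MulAut F) :
    ∃ β : MulAut F, IsW1 β ∧ ∃ ds : List (Fin 4), ∃ φ' : MulAut F,
      (IsC1 φ' ∨ IsC2 φ') ∧ φ = β * (ds.map δIdx).prod * φ' := by
  exact good_final (good_of_H (mem_H φ))
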